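/- arXiv:2402.00964 — 4 statements merged into one kernel-verified Lean document; each statement's English description precedes it below -/
import Mathlib

section
/- For finite process terms p and q over an alphabet A and any a ∈ A: if p has no a-transition (¬(p →a)), then p ≲_CS p + a.q; that is, conformance simulation allows extending the set of actions offered by a process. -/
/-- Finite process terms over an alphabet `A`: `0`, action prefix `a.p`,
and choice `p + q`. -/
inductive Proc (A : Type) : Type where
  | nil : Proc A
  | act (a : A) (p : Proc A) : Proc A
  | plus (p q : Proc A) : Proc A

/-- Operational semantics of finite process terms: `a.p →a p`, and
`p + q →a r` if `p →a r` or `q →a r`. -/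
inductive Step {A : Type} : Proc A → A → Proc A → Prop where
  | act (a : A) (p : Proc A) : Step (.act a p) a p
  | plusL {p q r : Proc A} {a : A} : Step p a r → Step (.plus p q) a r
  | plusR {p q r : Proc A} {a : A} : Step q a r → Step (.plus p q) a r

/-- A conformance simulation on finite process terms. -/
def CSSim {A : Type} (R : Proc A → Proc A → Prop) : Prop :=
  ∀ p q, R p q →
    (∀ a : A, (∃ p', Step p a p') → ∃ q', Step q a q') ∧
    (∀ a : A, ∀ q', Step q a q' → (∃ p'', Step p a p'') →
      ∃ p', Step p a p' ∧ R p' q')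

/-- The conformance simulation preorder on finite process terms. -/
def csLe {A : Type} (p q : Proc A) : Prop :=
  ∃ R, CSSim R ∧ R p q

/-- Conformance simulation allows extending the set of actions offered by a
process: if `p` has no `a`-transition then `p ≲_CS p + a.q`. -/
theorem csLe_plus_new_action {A : Type} (p q : Proc A) (a : A)
    (h : ¬ ∃ p', Step p a p') :
    csLe p (.plus p (.act a q)) := by
  refine ⟨fun x y => x = y ∨ (x = p ∧ y = .plus p (.act a q)), ?_, Or.inr ⟨rfl, rfl⟩⟩
  rintro x y (rfl | ⟨rfl, rfl⟩)
  · exact ⟨fun _ hb => hb, fun _ y' hy _ => ⟨y', hy, Or.inl rfl⟩⟩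
  · refine ⟨fun _ ⟨p', hp⟩ => ⟨p', .plusL hp⟩, fun b y' hy hb => ?_⟩
    cases hy with
    | plusL hp => exact ⟨y', hp, Or.inl rfl⟩
    | plusR hq =>
      -- The new summand only offers `a`, which the left-hand process refuses.
      cases hq
      exact absurd hb h
end

section
/- For all finite process terms p and q over an alphabet A and any a ∈ A: a.p + a.q ≲_CS a.p; that is, a process can be improved in the conformance simulation preorder by reducing its nondeterminism. -/
/-- A process can be improved in the conformance simulation preorder by
reducing its nondeterminism: `a.p + a.q ≲_CS a.p`. -/
theorem csLe_reduce_nondet {A : Type} (p q : Proc A) (a : A) :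
    csLe (Proc.plus (.act a p) (.act a q)) (.act a p) := by
  -- The identity together with the single pair to be related: the only move of
  -- `a.p` is to `p`, which the left summand matches exactly.
  refine ⟨fun x y => x = y ∨ (x = .plus (.act a p) (.act a q) ∧ y = .act a p),
    ?_, Or.inr ⟨rfl, rfl⟩⟩
  rintro x y (rfl | ⟨rfl, rfl⟩)
  · exact ⟨fun _ h => h, fun _ r h _ => ⟨r, h, Or.inl rfl⟩⟩
  · refine ⟨?_, fun _ r h _ => ⟨r, .plusL h, Or.inl rfl⟩⟩
    rintro b ⟨r, h⟩
    cases h with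
    | plusL h => cases h; exact ⟨p, .act a p⟩
    | plusR h => cases h; exact ⟨p, .act a p⟩
end

section
/- For all finite process terms p and q over an alphabet A and any a ∈ A: if p ≲_CS q, then a.p and a.p + a.q are conformance simulation equivalent, i.e., a.p ≲_CS a.p + a.q and a.p + a.q ≲_CS a.p. -/
theorem csSim_csLe {A : Type} : CSSim (csLe (A := A)) := by
  rintro p q ⟨R, hR, hpq⟩
  refine ⟨(hR p q hpq).1, fun b q' hq hp => ?_⟩
  obtain ⟨p', hp', hr⟩ := (hR p q hpq).2 b q' hq hp
  exact ⟨p', hp', R, hR, hr⟩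

theorem csLe_refl {A : Type} (p : Proc A) : csLe p p :=
  ⟨Eq, by rintro p _ rfl; exact ⟨fun _ h => h, fun _ q' h _ => ⟨q', h, rfl⟩⟩, rfl⟩

/-- Coinduction: one round of the transfer conditions into `csLe` suffices, since adjoining the
pair `(p, q)` to `csLe` gives a conformance simulation. -/
theorem csLe_of_transfer {A : Type} {p q : Proc A}
    (h₁ : ∀ b : A, (∃ p', Step p b p') → ∃ q', Step q b q')
    (h₂ : ∀ b : A, ∀ q', Step q b q' → (∃ p'', Step p b p'') →
      ∃ p', Step p b p' ∧ csLe p' q') : csLe p q := by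
  refine ⟨fun x y => csLe x y ∨ (x = p ∧ y = q), ?_, Or.inr ⟨rfl, rfl⟩⟩
  rintro x y (hxy | ⟨rfl, rfl⟩)
  · refine ⟨(csSim_csLe x y hxy).1, fun b y' hy hx => ?_⟩
    obtain ⟨x', hx', hr⟩ := (csSim_csLe x y hxy).2 b y' hy hx
    exact ⟨x', hx', Or.inl hr⟩
  · refine ⟨h₁, fun b y' hy hx => ?_⟩
    obtain ⟨x', hx', hr⟩ := h₂ b y' hy hx
    exact ⟨x', hx', Or.inl hr⟩

/-- If `p ≲_CS q` then `a.p` and `a.p + a.q` are conformance simulation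
equivalent. -/
theorem csLe_act_plus_equiv {A : Type} (p q : Proc A) (a : A)
    (h : csLe p q) :
    csLe (Proc.act a p) (.plus (.act a p) (.act a q)) ∧
    csLe (Proc.plus (.act a p) (.act a q)) (.act a p) := by
  constructor
  · apply csLe_of_transfer
    · rintro b ⟨p', hp⟩
      exact ⟨p', .plusL hp⟩
    · rintro b r (_ | hr | hr) _
      · exact ⟨r, hr, csLe_refl r⟩
      · cases hr
        exact ⟨p, .act a p, h⟩
  · apply csLe_of_transfer
    · rintro b ⟨r, (_ | hr | hr)⟩
      · exact ⟨r, hr⟩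
      · cases hr
        exact ⟨p, .act a p⟩
    · intro b r hr _
      exact ⟨r, .plusL hr, csLe_refl r⟩
end

section
/- Let A contain distinct actions a, b, c. For the finite process terms p = a.b.0 + a.c.0 and q = a.b.0 it holds that p ≲_CS q, p ⊨ ⟨a⟩⟨c⟩tt and q ⊭ ⟨a⟩⟨c⟩tt; hence satisfaction of formulas of the form ⟨a⟩φ (the existential modality used alone) is not preserved by the conformance simulation preorder. -/
/-- Formulas built with the existential modality `⟨a⟩φ` and `tt`. -/
inductive LDia (A : Type) : Type where
  | tt : LDia A
  | dia (a : A) (φ : LDia A) : LDia A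

/-- Satisfaction of existential-modality formulas over finite process terms. -/
def SatDia {A : Type} : Proc A → LDia A → Prop
  | _, .tt => True
  | p, .dia a φ => ∃ p', Step p a p' ∧ SatDia p' φ

/-- For `p = a.b.0 + a.c.0` and `q = a.b.0` we have `p ≲_CS q`,
`p ⊨ ⟨a⟩⟨c⟩tt` and `q ⊭ ⟨a⟩⟨c⟩tt`: satisfaction of formulas built with the
existential modality alone is not preserved by the conformance simulation
preorder. -/
theorem dia_alone_not_preserved_by_csLe {A : Type} (a b c : A)
    (hab : a ≠ b) (hac : a ≠ c) (hbc : b ≠ c) :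
    csLe (Proc.plus (.act a (.act b .nil)) (.act a (.act c .nil)))
        (Proc.act a (.act b .nil)) ∧
      SatDia (Proc.plus (.act a (.act b .nil)) (.act a (.act c .nil)))
        (.dia a (.dia c .tt)) ∧
      ¬ SatDia (Proc.act a (.act b .nil)) (.dia a (.dia c .tt)) := by
  refine ⟨⟨fun x y => x = y ∨
      (x = Proc.plus (.act a (.act b .nil)) (.act a (.act c .nil)) ∧
        y = Proc.act a (.act b .nil)), ?_, Or.inr ⟨rfl, rfl⟩⟩, ?_, ?_⟩
  · rintro x y (rfl | ⟨rfl, rfl⟩)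
    · exact ⟨fun _ h => h, fun _ r h _ => ⟨r, h, Or.inl rfl⟩⟩
    · refine ⟨?_, fun _ r h _ => ⟨r, .plusL h, Or.inl rfl⟩⟩
      rintro d ⟨r, h⟩
      cases h with
      | plusL h => cases h; exact ⟨_, .act _ _⟩
      | plusR h => cases h; exact ⟨_, .act _ _⟩
  · exact ⟨_, .plusR (.act _ _), _, .act _ _, trivial⟩
  · rintro ⟨r, h, s, h', -⟩
    cases h
    cases h'
    exact hbc rfl
end
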